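/- Let 0 ≤ δ < 1 and M ≥ 1. Let V : ℝ → Matrix(M, M, ℂ) be continuous and 2π-periodic with V(x) Hermitian and positive semidefinite for every x. Let P act componentwise by (Pψ)(x) = ψ(x) − (1/(2π)) ∫_0^{2π} ψ(t) dt. Suppose φ_1, …, φ_N : ℝ → ℂ^M are C² functions, 2π-periodic, with ∫_0^{2π} φ_n(t) dt = 0, orthonormal in L²((0, 2π); ℂ^M), and for each n there is μ_n > 0 such that −φ_n''(x) − δ φ_n(x) − (P(V · (Pφ_n)))(x) = −μ_n φ_n(x) for all x. Then ∑_{n=1}^N μ_n ≤ (2/(3√3)) · K₂(δ) · ∫_0^{2π} Tr[V(x)^{3/2}] dx. -/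

import Mathlib

open Real MeasureTheory ComplexOrder

/-- The sharp constant `K₂(β) = sup_{λ>0} (√λ/π) · ∑_{k ∈ ℤ, k ≠ 0} 1/(k² − β + λ)`. -/
noncomputable def K2 (β : ℝ) : ℝ :=
  ⨆ l : Set.Ioi (0 : ℝ),
    Real.sqrt l / π * ∑' k : {k : ℤ // k ≠ 0}, 1 / ((k.1 : ℝ) ^ 2 - β + l)

/-- The projection removing the mean value over `(0, 2π)`, acting componentwise on
vector-valued functions. -/
noncomputable def projP {M : ℕ} (ψ : ℝ → Fin M → ℂ) (x : ℝ) : Fin M → ℂ :=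
  ψ x - (1 / (2 * π)) • ∫ t in (0:ℝ)..(2 * π), ψ t

/-!
Expanding a mean-zero periodic `f` in a Fourier series and applying Cauchy–Schwarz with the weights
`k² - δ + λ` gives `2 √λ ‖f x‖² ≤ K₂(δ) (‖f'‖² - δ ‖f‖² + λ ‖f‖²)`, and optimising over `λ` yields
the interpolation inequality `‖f x‖⁴ ≤ K₂(δ)² ‖f‖² (‖f'‖² - δ ‖f‖²)`, where the norms without an
argument are those of `L²(0, 2π)`. For an orthonormal family `φ` and a unit vector `e`, the choice
`f = ∑ ⟪φₙ x, e⟫ φₙ` bounds the cube of the density `∑ |⟪e, φₙ x⟫|²` by a quadratic expression in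
`e`. Taking for `e` the eigenvectors of `V x`, weighting with the eigenvalues by means of Young's
inequality and integrating in `x`, orthonormality gives
`∑ (⟪φₙ, V φₙ⟫ - ‖φₙ'‖² + δ ‖φₙ‖²) ≤ 2 / (3 √3) K₂(δ) ∫ Tr V ^ (3 / 2)`; for eigenfunctions the
summands on the left are the `μₙ`.
-/

section LatticeSum

lemma one_le_intCast_sq {k : ℤ} (hk : k ≠ 0) : (1 : ℝ) ≤ (k : ℝ) ^ 2 := by
  exact_mod_cast (one_le_sq_iff_one_le_abs k).2 (Int.one_le_abs hk)

lemma hasSum_one_div_mul_add_one {s : ℝ} (hs : 0 < s) :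
    HasSum (fun n : ℕ ↦ 1 / ((n + s) * (n + 1 + s))) (1 / s) := by
  rw [hasSum_iff_tendsto_nat_of_nonneg (fun n ↦ by positivity)]
  have term_eq_sub (n : ℕ) :
      1 / ((n + s) * (n + 1 + s)) = 1 / (n + s) - 1 / ((n + 1 : ℕ) + s) := by
    push_cast
    field_simp
    ring
  have tendsto_tail : Filter.Tendsto (fun n : ℕ ↦ 1 / ((n : ℝ) + s)) Filter.atTop (nhds 0) := by
    simp only [one_div]
    exact (Filter.tendsto_atTop_add_const_right _ s
      tendsto_natCast_atTop_atTop).inv_tendsto_atTop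
  simp only [term_eq_sub, Finset.sum_range_sub' (fun n : ℕ ↦ 1 / ((n : ℝ) + s))]
  simpa using tendsto_tail.const_sub (1 / s)

lemma hasSum_ne_zero_iff {G : Type*} [AddCommMonoid G] [TopologicalSpace G] {f : ℤ → G}
    (hf : f 0 = 0) {a : G} : HasSum (fun k : {k : ℤ // k ≠ 0} ↦ f k) a ↔ HasSum f a :=
  hasSum_subtype_iff_of_support_subset (s := {k | k ≠ 0}) fun _ hk h0 ↦ hk (h0 ▸ hf)

lemma hasSum_ne_zero_of_even {G : Type*} [AddCommMonoid G] [TopologicalSpace G] [ContinuousAdd G]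
    {f : ℤ → G} (hf : Function.Even f) {a : G} (ha : HasSum (fun n : ℕ ↦ f (n + 1)) a) :
    HasSum (fun k : {k : ℤ // k ≠ 0} ↦ f k) (a + a) := by
  have hg (n : ℕ) : Function.update f 0 0 (n + 1) = f (n + 1) :=
    Function.update_of_ne (by lia) _ _
  have hg_neg (n : ℕ) : Function.update f 0 0 (-(n + 1)) = f (n + 1) :=
    (Function.update_of_ne (by lia) _ _).trans (hf _)
  have hsum := HasSum.of_add_one_of_neg_add_one (f := Function.update f 0 0)
    (by simpa only [hg] using ha) (by simpa only [hg_neg] using ha)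
  rw [Function.update_self, add_zero, ← hasSum_ne_zero_iff (Function.update_self ..)] at hsum
  exact hsum.congr_fun fun k ↦ (Function.update_of_ne k.2 _ _).symm

lemma one_div_add_one_sq_add_sq_le {s : ℝ} (hs : 0 < s) (n : ℕ) :
    1 / (((n : ℝ) + 1) ^ 2 + s ^ 2) ≤ 2 * (1 / ((n + s) * (n + 1 + s))) := by
  rw [mul_one_div, div_le_div_iff₀ (by positivity) (by positivity)]
  nlinarith [sq_nonneg ((n : ℝ) + 1 - s), (Nat.cast_nonneg n : (0 : ℝ) ≤ n)]

lemma exists_hasSum_one_div_sq_add_sq {s : ℝ} (hs : 0 < s) :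
    ∃ a ≤ 4 / s, HasSum (fun k : {k : ℤ // k ≠ 0} ↦ 1 / ((k : ℝ) ^ 2 + s ^ 2)) a := by
  have majorant := (hasSum_one_div_mul_add_one hs).mul_left 2
  have hsum : Summable fun n : ℕ ↦ 1 / (((n : ℝ) + 1) ^ 2 + s ^ 2) :=
    majorant.summable.of_nonneg_of_le (fun n ↦ by positivity) (one_div_add_one_sq_add_sq_le hs)
  have hle := hasSum_le (one_div_add_one_sq_add_sq_le hs) hsum.hasSum majorant
  refine ⟨_, ?_, hasSum_ne_zero_of_even (f := fun k : ℤ ↦ 1 / ((k : ℝ) ^ 2 + s ^ 2))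
    (fun k ↦ by simp) (by push_cast; exact hsum.hasSum)⟩
  calc _ ≤ 2 * (1 / s) + 2 * (1 / s) := add_le_add hle hle
    _ = 4 / s := by ring

variable {δ l : ℝ}

lemma min_mul_sq_add_le (hl : 0 ≤ l) {k : ℤ} (hk : k ≠ 0) :
    min 1 (1 - δ) * ((k : ℝ) ^ 2 + l) ≤ (k : ℝ) ^ 2 - δ + l := by
  have hk' := one_le_intCast_sq hk
  rcases le_total δ 0 with hδ0 | hδ0
  · rw [min_eq_left (by linarith)]
    linarith
  · rw [min_eq_right (by linarith)]
    nlinarith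

lemma sq_sub_add_pos (hδ : δ < 1) (hl : 0 ≤ l) {k : ℤ} (hk : k ≠ 0) :
    0 < (k : ℝ) ^ 2 - δ + l := by
  linarith [one_le_intCast_sq hk]

lemma exists_hasSum_one_div_sq_sub_add (hδ : δ < 1) (hl : 0 < l) :
    ∃ a ≤ 4 / (min 1 (1 - δ) * √l),
      HasSum (fun k : {k : ℤ // k ≠ 0} ↦ 1 / ((k : ℝ) ^ 2 - δ + l)) a := by
  have hc : 0 < min 1 (1 - δ) := lt_min one_pos (by linarith)
  obtain ⟨a, ha, hsum⟩ := exists_hasSum_one_div_sq_add_sq (sqrt_pos.2 hl)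
  have hterm (k : {k : ℤ // k ≠ 0}) :
      1 / ((k : ℝ) ^ 2 - δ + l) ≤ (min 1 (1 - δ))⁻¹ * (1 / ((k : ℝ) ^ 2 + √l ^ 2)) := by
    rw [sq_sqrt hl.le, inv_eq_one_div, one_div_mul_one_div]
    exact one_div_le_one_div_of_le (by positivity) (min_mul_sq_add_le hl.le k.2)
  have hsum' := (hsum.mul_left (min 1 (1 - δ))⁻¹).summable.of_nonneg_of_le
    (fun k ↦ (one_div_pos.2 (sq_sub_add_pos hδ hl.le k.2)).le) hterm
  refine ⟨_, ?_, hsum'.hasSum⟩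
  calc _ ≤ (min 1 (1 - δ))⁻¹ * a := hasSum_le hterm hsum'.hasSum (hsum.mul_left _)
    _ ≤ (min 1 (1 - δ))⁻¹ * (4 / √l) := by gcongr
    _ = 4 / (min 1 (1 - δ) * √l) := by field_simp

lemma summable_one_div_sq_sub_add (hδ : δ < 1) (hl : 0 < l) :
    Summable fun k : {k : ℤ // k ≠ 0} ↦ 1 / ((k : ℝ) ^ 2 - δ + l) :=
  let ⟨_, _, hsum⟩ := exists_hasSum_one_div_sq_sub_add hδ hl
  hsum.summable

lemma sqrt_div_pi_mul_tsum_le_K2 (hδ : δ < 1) (hl : 0 < l) :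
    √l / π * ∑' k : {k : ℤ // k ≠ 0}, 1 / ((k : ℝ) ^ 2 - δ + l) ≤ K2 δ := by
  refine le_ciSup (f := fun l : Set.Ioi (0 : ℝ) ↦
    √l / π * ∑' k : {k : ℤ // k ≠ 0}, 1 / ((k : ℝ) ^ 2 - δ + l)) ?_ ⟨l, hl⟩
  refine ⟨4 / (min 1 (1 - δ) * π), ?_⟩
  rintro _ ⟨⟨t, ht : 0 < t⟩, rfl⟩
  obtain ⟨a, ha, hsum⟩ := exists_hasSum_one_div_sq_sub_add hδ ht
  calc √t / π * ∑' k : {k : ℤ // k ≠ 0}, 1 / ((k : ℝ) ^ 2 - δ + t)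
      ≤ √t / π * (4 / (min 1 (1 - δ) * √t)) := by rw [hsum.tsum_eq]; gcongr
    _ = 4 / (min 1 (1 - δ) * π) := by field_simp

lemma K2_pos (hδ : δ < 1) : 0 < K2 δ := by
  refine lt_of_lt_of_le (mul_pos (by positivity) ?_) (sqrt_div_pi_mul_tsum_le_K2 hδ one_pos)
  have hterm (k : {k : ℤ // k ≠ 0}) : 0 < 1 / ((k : ℝ) ^ 2 - δ + 1) :=
    one_div_pos.2 (sq_sub_add_pos hδ zero_le_one k.2)
  exact (summable_one_div_sq_sub_add hδ one_pos).tsum_pos (fun k ↦ (hterm k).le)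
    ⟨1, one_ne_zero⟩ (hterm _)

end LatticeSum

section FourierCoefficients

lemma summable_and_sq_tsum_le_of_hasSum_mul_sq {ι : Type*} {w c : ι → ℝ} {Q : ℝ}
    (hw : ∀ i, 0 < w i) (hc : ∀ i, 0 ≤ c i) (hS : Summable fun i ↦ 1 / w i)
    (hQ : HasSum (fun i ↦ w i * c i ^ 2) Q) :
    Summable c ∧ (∑' i, c i) ^ 2 ≤ (∑' i, 1 / w i) * Q := by
  have hw' (i : ι) : 0 ≤ 1 / w i := (one_div_pos.2 (hw i)).le
  have hwc (i : ι) : 0 ≤ w i * c i ^ 2 := mul_nonneg (hw i).le (sq_nonneg _)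
  have hSQ : 0 ≤ (∑' i, 1 / w i) * Q := mul_nonneg (tsum_nonneg hw') (hQ.nonneg hwc)
  have cauchy_schwarz (s : Finset ι) : ∑ i ∈ s, c i ≤ √((∑' i, 1 / w i) * Q) := by
    refine le_sqrt_of_sq_le ((Finset.sum_sq_le_sum_mul_sum_of_sq_le_mul s (fun i _ ↦ hw' i)
      (fun i _ ↦ hwc i) fun i _ ↦ ?_).trans ?_)
    · rw [← mul_assoc, one_div_mul_cancel (hw i).ne', one_mul]
    · exact mul_le_mul (hS.sum_le_tsum s fun i _ ↦ hw' i) (sum_le_hasSum s (fun i _ ↦ hwc i) hQ)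
        (Finset.sum_nonneg fun i _ ↦ hwc i) (tsum_nonneg hw')
  have hsum : Summable c := summable_of_sum_le hc cauchy_schwarz
  exact ⟨hsum, (le_sqrt (tsum_nonneg hc) hSQ).1 (hsum.tsum_le_of_sum_le cauchy_schwarz)⟩

lemma norm_le_tsum_norm_fourierCoeffOn {T : ℝ} (hT : 0 < T) {f : ℝ → ℂ} (hf : Continuous f)
    (hper : Function.Periodic f T) (hsum : Summable fun k ↦ ‖fourierCoeffOn hT f k‖) (x : ℝ) :
    ‖f x‖ ≤ ∑' k, ‖fourierCoeffOn hT f k‖ := by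
  have : Fact (0 < T) := ⟨hT⟩
  let F : C(AddCircle T, ℂ) := ⟨hper.lift, continuous_coinduced_dom.mpr (by exact hf)⟩
  have hcoeff (k : ℤ) : fourierCoeff F k = fourierCoeffOn hT f k := by
    rw [fourierCoeff_eq_intervalIntegral _ _ 0, fourierCoeffOn_eq_integral]
    simp only [fourier_coe_apply, sub_zero, zero_add]
    rfl
  have hnorm (k : ℤ) :
      ‖fourierCoeff F k • fourier k (x : AddCircle T)‖ = ‖fourierCoeffOn hT f k‖ := by
    rw [norm_smul, hcoeff, fourier_apply, Circle.norm_coe, mul_one]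
  have hseries : HasSum (fun k ↦ fourierCoeff F k • fourier k (x : AddCircle T)) (f x) :=
    has_pointwise_sum_fourier_series_of_summable (f := F)
      (Summable.of_norm (by simpa only [hcoeff] using hsum)) x
  rw [← hseries.tsum_eq]
  exact (norm_tsum_le_tsum_norm (by simpa only [hnorm] using hsum)).trans_eq (by simp only [hnorm])

lemma fourierCoeffOn_derivative {a b : ℝ} (hab : a < b) {f f' : ℝ → ℂ}
    (hf : ∀ x ∈ Set.uIcc a b, HasDerivAt f (f' x) x) (hf' : IntervalIntegrable f' volume a b)
    (hends : f a = f b) (k : ℤ) :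
    fourierCoeffOn hab f' k =
      (2 * π * Complex.I * k / (b - a)) * fourierCoeffOn hab f k := by
  rcases eq_or_ne k 0 with rfl | hk
  · simp [fourierCoeffOn_eq_integral, intervalIntegral.integral_eq_sub_of_hasDerivAt hf hf', hends]
  · have hba : (b : ℂ) - a ≠ 0 := by exact_mod_cast (sub_pos.2 hab).ne'
    have hk' : (k : ℂ) ≠ 0 := by exact_mod_cast hk
    have hpi : (π : ℂ) ≠ 0 := by exact_mod_cast pi_ne_zero
    rw [fourierCoeffOn_of_hasDerivAt hab hk hf hf', hends, sub_self, mul_zero, zero_sub]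
    field_simp [Complex.I_ne_zero]

lemma hasSum_sq_norm_fourierCoeffOn_of_continuousOn {a b : ℝ} (hab : a < b) {f : ℝ → ℂ}
    (hf : ContinuousOn f (Set.Icc a b)) :
    HasSum (fun k ↦ ‖fourierCoeffOn hab f k‖ ^ 2) ((b - a)⁻¹ * ∫ x in a..b, ‖f x‖ ^ 2) := by
  obtain ⟨C, hC⟩ := isCompact_Icc.exists_bound_of_continuousOn hf
  refine hasSum_sq_fourierCoeffOn hab (MemLp.of_bound ?_ C ?_)
  · exact (hf.mono Set.Ioc_subset_Icc_self).aestronglyMeasurable measurableSet_Ioc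
  · filter_upwards [ae_restrict_mem measurableSet_Ioc] with x hx
    exact hC x (Set.Ioc_subset_Icc_self hx)

end FourierCoefficients

section Agmon

/-- A `C¹` and `2π`-periodic function with mean value zero: the regular elements of the Sobolev
space of mean-zero functions on the circle. -/
structure IsPeriodicMeanZero {F : Type*} [NormedAddCommGroup F] [NormedSpace ℝ F]
    (f : ℝ → F) : Prop where
  contDiff : ContDiff ℝ 1 f
  periodic : Function.Periodic f (2 * π)
  integral_eq_zero : ∫ x in 0..2 * π, f x = 0

/-- The quadratic form of `-d²/dx² - δ` on `2π`-periodic functions. -/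
noncomputable def energy {F : Type*} [NormedAddCommGroup F] [NormedSpace ℝ F] (δ : ℝ)
    (f : ℝ → F) : ℝ :=
  (∫ x in 0..2 * π, ‖deriv f x‖ ^ 2) - δ * ∫ x in 0..2 * π, ‖f x‖ ^ 2

namespace IsPeriodicMeanZero

section

variable {F G : Type*} [NormedAddCommGroup F] [NormedSpace ℝ F] [NormedAddCommGroup G]
  [NormedSpace ℝ G] {f : ℝ → F}

lemma hasDerivAt (hf : IsPeriodicMeanZero f) (x : ℝ) : HasDerivAt f (deriv f x) x :=
  (hf.contDiff.differentiable one_ne_zero x).hasDerivAt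

lemma continuous_deriv (hf : IsPeriodicMeanZero f) : Continuous (deriv f) :=
  hf.contDiff.continuous_deriv_one

lemma clm_comp [CompleteSpace F] [CompleteSpace G] (hf : IsPeriodicMeanZero f) (L : F →L[ℝ] G) :
    IsPeriodicMeanZero fun x ↦ L (f x) where
  contDiff := L.contDiff.comp hf.contDiff
  periodic := hf.periodic.comp L
  integral_eq_zero := by
    rw [L.intervalIntegral_comp_comm (hf.contDiff.continuous.intervalIntegrable _ _),
      hf.integral_eq_zero, map_zero]

end

section Scalar

variable {δ l : ℝ} {f : ℝ → ℂ}

lemma fourierCoeffOn_zero (hf : IsPeriodicMeanZero f) : fourierCoeffOn two_pi_pos f 0 = 0 := by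
  simp [fourierCoeffOn_eq_integral, hf.integral_eq_zero]

lemma norm_fourierCoeffOn_deriv (hf : IsPeriodicMeanZero f) (k : ℤ) :
    ‖fourierCoeffOn two_pi_pos (deriv f) k‖ = |(k : ℝ)| * ‖fourierCoeffOn two_pi_pos f k‖ := by
  rw [fourierCoeffOn_derivative two_pi_pos (fun x _ ↦ hf.hasDerivAt x)
    (hf.continuous_deriv.intervalIntegrable _ _) (by simpa using (hf.periodic 0).symm)]
  simp [abs_of_pos pi_pos, pi_ne_zero]

lemma hasSum_mul_sq_norm_fourierCoeffOn (hf : IsPeriodicMeanZero f) (δ l : ℝ) :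
    HasSum (fun k : {k : ℤ // k ≠ 0} ↦
        ((k : ℝ) ^ 2 - δ + l) * ‖fourierCoeffOn two_pi_pos f k‖ ^ 2)
      ((2 * π)⁻¹ * (energy δ f + l * ∫ x in 0..2 * π, ‖f x‖ ^ 2)) := by
  have parseval := hasSum_sq_norm_fourierCoeffOn_of_continuousOn two_pi_pos
    hf.contDiff.continuous.continuousOn
  have parseval_deriv := hasSum_sq_norm_fourierCoeffOn_of_continuousOn two_pi_pos
    hf.continuous_deriv.continuousOn
  simp only [hf.norm_fourierCoeffOn_deriv, mul_pow, sq_abs] at parseval_deriv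
  have hsum := parseval_deriv.add (parseval.mul_left (l - δ))
  rw [← hasSum_ne_zero_iff (by simp [hf.fourierCoeffOn_zero])] at hsum
  convert hsum using 1
  · ext k
    ring
  · rw [energy, sub_zero]
    ring

lemma energy_nonneg_of_complex (hδ : δ < 1) (hf : IsPeriodicMeanZero f) : 0 ≤ energy δ f := by
  have h := (hf.hasSum_mul_sq_norm_fourierCoeffOn δ 0).nonneg fun k ↦
    mul_nonneg (sq_sub_add_pos hδ le_rfl k.2).le (sq_nonneg _)
  rw [zero_mul, add_zero] at h
  exact nonneg_of_mul_nonneg_right h (by positivity)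

lemma sq_norm_le_tsum_mul (hδ : δ < 1) (hl : 0 < l) (hf : IsPeriodicMeanZero f) (x : ℝ) :
    ‖f x‖ ^ 2 ≤ (∑' k : {k : ℤ // k ≠ 0}, 1 / ((k : ℝ) ^ 2 - δ + l)) *
      ((2 * π)⁻¹ * (energy δ f + l * ∫ x in 0..2 * π, ‖f x‖ ^ 2)) := by
  obtain ⟨hsum, hle⟩ := summable_and_sq_tsum_le_of_hasSum_mul_sq
    (fun k : {k : ℤ // k ≠ 0} ↦ sq_sub_add_pos hδ hl.le k.2) (fun k ↦ norm_nonneg _)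
    (summable_one_div_sq_sub_add hδ hl) (hf.hasSum_mul_sq_norm_fourierCoeffOn δ l)
  have hsum_int : HasSum (fun k : ℤ ↦ ‖fourierCoeffOn two_pi_pos f k‖)
      (∑' k : {k : ℤ // k ≠ 0}, ‖fourierCoeffOn two_pi_pos f k‖) :=
    (hasSum_ne_zero_iff (by simp [hf.fourierCoeffOn_zero])).1 hsum.hasSum
  have hpoint := norm_le_tsum_norm_fourierCoeffOn two_pi_pos hf.contDiff.continuous hf.periodic
    hsum_int.summable x
  rw [hsum_int.tsum_eq] at hpoint
  exact (pow_le_pow_left₀ (norm_nonneg _) hpoint 2).trans hle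

lemma two_mul_sqrt_mul_sq_norm_le (hδ : δ < 1) (hl : 0 < l) (hf : IsPeriodicMeanZero f) (x : ℝ) :
    2 * √l * ‖f x‖ ^ 2 ≤ K2 δ *
      (energy δ f + l * ∫ x in 0..2 * π, ‖f x‖ ^ 2) := by
  have hnorm : 0 ≤ ∫ x in 0..2 * π, ‖f x‖ ^ 2 :=
    intervalIntegral.integral_nonneg two_pi_pos.le fun x _ ↦ sq_nonneg _
  have henergy := hf.energy_nonneg_of_complex hδ
  set Q := energy δ f + l * ∫ x in 0..2 * π, ‖f x‖ ^ 2
  calc 2 * √l * ‖f x‖ ^ 2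
      ≤ 2 * √l * ((∑' k : {k : ℤ // k ≠ 0}, 1 / ((k : ℝ) ^ 2 - δ + l)) * ((2 * π)⁻¹ * Q)) := by
        gcongr
        exact hf.sq_norm_le_tsum_mul hδ hl x
    _ = √l / π * (∑' k : {k : ℤ // k ≠ 0}, 1 / ((k : ℝ) ^ 2 - δ + l)) * Q := by
        field_simp
    _ ≤ K2 δ * Q := by
        gcongr
        exact sqrt_div_pi_mul_tsum_le_K2 hδ hl

-- The bound with parameter `l = s²` says that a quadratic polynomial in `s` is nonnegative;
-- its discriminant gives the bound optimised over `l`.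
lemma norm_pow_four_le_of_complex (hδ : δ < 1) (hf : IsPeriodicMeanZero f) (x : ℝ) :
    ‖f x‖ ^ 4 ≤ K2 δ ^ 2 * (∫ x in 0..2 * π, ‖f x‖ ^ 2) * energy δ f := by
  have hK := K2_pos hδ
  have hnorm : 0 ≤ ∫ x in 0..2 * π, ‖f x‖ ^ 2 :=
    intervalIntegral.integral_nonneg two_pi_pos.le fun x _ ↦ sq_nonneg _
  have henergy := hf.energy_nonneg_of_complex hδ
  have hl := fun l (hl : 0 < l) ↦ hf.two_mul_sqrt_mul_sq_norm_le hδ hl x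
  set B := ∫ x in 0..2 * π, ‖f x‖ ^ 2
  have quadratic_nonneg (s : ℝ) :
      0 ≤ K2 δ * B * (s * s) + -(2 * ‖f x‖ ^ 2) * s + K2 δ * energy δ f := by
    rcases le_or_gt s 0 with hs | hs
    · have : 0 ≤ -(2 * ‖f x‖ ^ 2) * s := mul_nonneg_of_nonpos_of_nonpos (by simp) hs
      have : 0 ≤ s * s := mul_self_nonneg s
      positivity
    · have := hl (s ^ 2) (by positivity)
      rw [sqrt_sq hs.le] at this
      linarith
  have := discrim_le_zero quadratic_nonneg
  unfold discrim at this
  linarith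

end Scalar

end IsPeriodicMeanZero

section Vector

open scoped InnerProductSpace

variable {ι E : Type*} [Fintype ι] [NormedAddCommGroup E] [InnerProductSpace ℂ E] {δ : ℝ}
  {f : ℝ → E}

lemma sum_integral_sq_norm_inner (b : OrthonormalBasis ι ℂ E) (hf : Continuous f) (u v : ℝ) :
    ∑ i, ∫ x in u..v, ‖⟪b i, f x⟫_ℂ‖ ^ 2 = ∫ x in u..v, ‖f x‖ ^ 2 := by
  have hcont (i : ι) : Continuous fun x ↦ ‖⟪b i, f x⟫_ℂ‖ ^ 2 := by fun_prop
  rw [← intervalIntegral.integral_finsetSum fun i _ ↦ (hcont i).intervalIntegrable _ _]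
  simp only [b.sum_sq_norm_inner_right]

lemma sum_energy_inner (b : OrthonormalBasis ι ℂ E) (hf : ContDiff ℝ 1 f) (δ : ℝ) :
    ∑ i, energy δ (fun x ↦ ⟪b i, f x⟫_ℂ) = energy δ f := by
  have deriv_inner (i : ι) : deriv (fun x ↦ ⟪b i, f x⟫_ℂ) = fun x ↦ ⟪b i, deriv f x⟫_ℂ :=
    funext fun x ↦ (((innerSL ℂ (b i)).restrictScalars ℝ).hasFDerivAt.comp_hasDerivAt x
      (hf.differentiable one_ne_zero x).hasDerivAt).deriv
  simp only [energy, deriv_inner, Finset.sum_sub_distrib, ← Finset.mul_sum,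
    sum_integral_sq_norm_inner b hf.continuous,
    sum_integral_sq_norm_inner b hf.continuous_deriv_one]

namespace IsPeriodicMeanZero

lemma inner_left [CompleteSpace E] (hf : IsPeriodicMeanZero f) (e : E) :
    IsPeriodicMeanZero fun x ↦ ⟪e, f x⟫_ℂ :=
  hf.clm_comp ((innerSL ℂ e).restrictScalars ℝ)

variable [FiniteDimensional ℂ E]

lemma energy_nonneg (hδ : δ < 1) (hf : IsPeriodicMeanZero f) : 0 ≤ energy δ f := by
  have := FiniteDimensional.complete ℂ E
  rw [← sum_energy_inner (stdOrthonormalBasis ℂ E) hf.contDiff]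
  exact Finset.sum_nonneg fun i _ ↦ (hf.inner_left _).energy_nonneg_of_complex hδ

theorem norm_pow_four_le (hδ : δ < 1) (hf : IsPeriodicMeanZero f) (x : ℝ) :
    ‖f x‖ ^ 4 ≤ K2 δ ^ 2 * (∫ x in 0..2 * π, ‖f x‖ ^ 2) * energy δ f := by
  have := FiniteDimensional.complete ℂ E
  let b := stdOrthonormalBasis ℂ E
  have hcomp (i) := hf.inner_left (b i)
  calc ‖f x‖ ^ 4
      = (∑ i, ‖⟪b i, f x⟫_ℂ‖ ^ 2) ^ 2 := by rw [b.sum_sq_norm_inner_right]; ring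
    _ ≤ (∑ i, K2 δ ^ 2 * ∫ x in 0..2 * π, ‖⟪b i, f x⟫_ℂ‖ ^ 2) *
          ∑ i, energy δ fun x ↦ ⟪b i, f x⟫_ℂ :=
        Finset.sum_sq_le_sum_mul_sum_of_sq_le_mul _
          (fun i _ ↦ mul_nonneg (sq_nonneg _)
            (intervalIntegral.integral_nonneg two_pi_pos.le fun _ _ ↦ sq_nonneg _))
          (fun i _ ↦ (hcomp i).energy_nonneg_of_complex hδ)
          (fun i _ ↦ by rw [← pow_mul]; exact (hcomp i).norm_pow_four_le_of_complex hδ x)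
    _ = K2 δ ^ 2 * (∫ x in 0..2 * π, ‖f x‖ ^ 2) * energy δ f := by
        rw [← Finset.mul_sum, sum_integral_sq_norm_inner b hf.contDiff.continuous,
          sum_energy_inner b hf.contDiff]

end IsPeriodicMeanZero

end Vector

end Agmon

section L2Forms

open scoped InnerProductSpace ComplexConjugate

variable {E : Type*} [NormedAddCommGroup E] [InnerProductSpace ℂ E]

/-- The inner product of `L²((0, 2π); E)`, conjugate-linear in the first argument. -/
noncomputable def l2Inner (f g : ℝ → E) : ℂ :=
  ∫ x in 0..2 * π, ⟪f x, g x⟫_ℂ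

/-- The sesquilinear form of `-d²/dx² - δ` on `2π`-periodic functions; `energy δ` is its
diagonal. -/
noncomputable def energyForm (δ : ℝ) (f g : ℝ → E) : ℂ :=
  l2Inner (deriv f) (deriv g) - δ * l2Inner f g

lemma l2Inner_self (f : ℝ → E) : l2Inner f f = (∫ x in 0..2 * π, ‖f x‖ ^ 2 : ℝ) := by
  simp only [l2Inner, inner_self_eq_norm_sq_to_K]
  exact_mod_cast intervalIntegral.integral_ofReal

lemma energyForm_self (δ : ℝ) (f : ℝ → E) : energyForm δ f f = energy δ f := by
  simp only [energyForm, l2Inner_self, energy]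
  push_cast
  rfl

variable {ι : Type*} [Fintype ι] {φ : ι → ℝ → E}

lemma l2Inner_sum_smul (c : ι → ℂ) (hφ : ∀ n, Continuous (φ n)) :
    l2Inner (fun x ↦ ∑ n, c n • φ n x) (fun x ↦ ∑ n, c n • φ n x) =
      ∑ n, ∑ m, conj (c n) * c m * l2Inner (φ n) (φ m) := by
  have hcont (n m) : Continuous fun x ↦ conj (c n) * c m * ⟪φ n x, φ m x⟫_ℂ :=
    continuous_const.mul ((hφ n).inner (hφ m))
  simp only [l2Inner, ← intervalIntegral.integral_const_mul]
  simp_rw [← intervalIntegral.integral_finsetSum fun m _ ↦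
    (hcont _ m).intervalIntegrable 0 (2 * π)]
  rw [← intervalIntegral.integral_finsetSum fun n _ ↦
    (continuous_finsetSum _ fun m _ ↦ hcont n m).intervalIntegrable _ _]
  simp only [sum_inner, inner_sum, inner_smul_left, inner_smul_right, mul_assoc, Finset.mul_sum]
  simp only [mul_left_comm (c _)]
  exact intervalIntegral.integral_congr fun x _ ↦ Finset.sum_comm

lemma energyForm_sum_smul (δ : ℝ) (c : ι → ℂ) (hφ : ∀ n, ContDiff ℝ 1 (φ n)) :
    energyForm δ (fun x ↦ ∑ n, c n • φ n x) (fun x ↦ ∑ n, c n • φ n x) =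
      ∑ n, ∑ m, conj (c n) * c m * energyForm δ (φ n) (φ m) := by
  have deriv_sum : deriv (fun x ↦ ∑ n, c n • φ n x) = fun x ↦ ∑ n, c n • deriv (φ n) x :=
    funext fun x ↦ (HasDerivAt.fun_sum fun n _ ↦
      ((hφ n).differentiable one_ne_zero x).hasDerivAt.fun_const_smul (c n)).deriv
  rw [energyForm, deriv_sum, l2Inner_sum_smul c fun n ↦ (hφ n).continuous_deriv_one,
    l2Inner_sum_smul c fun n ↦ (hφ n).continuous, Finset.mul_sum, ← Finset.sum_sub_distrib]
  refine Finset.sum_congr rfl fun n _ ↦ ?_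
  rw [Finset.mul_sum, ← Finset.sum_sub_distrib]
  exact Finset.sum_congr rfl fun m _ ↦ by rw [energyForm]; ring

lemma IsPeriodicMeanZero.sum_smul [CompleteSpace E] (c : ι → ℂ)
    (hφ : ∀ n, IsPeriodicMeanZero (φ n)) :
    IsPeriodicMeanZero fun x ↦ ∑ n, c n • φ n x where
  contDiff := ContDiff.sum fun n _ ↦ (hφ n).contDiff.const_smul (c n)
  periodic x := by simp only [(hφ _).periodic x]
  integral_eq_zero := by
    have hcont (n : ι) : Continuous fun x ↦ c n • φ n x :=
      (hφ n).contDiff.continuous.const_smul (c n)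
    rw [intervalIntegral.integral_finsetSum fun n _ ↦ (hcont n).intervalIntegrable _ _]
    simp only [intervalIntegral.integral_smul, (hφ _).integral_eq_zero, smul_zero,
      Finset.sum_const_zero]

end L2Forms

section OrthonormalFamily

open scoped InnerProductSpace ComplexConjugate

variable {ι E : Type*} [Fintype ι] [DecidableEq ι] [NormedAddCommGroup E] [InnerProductSpace ℂ E]
  {δ : ℝ} {φ : ι → ℝ → E}

lemma l2Inner_sum_smul_of_orthonormal (c : ι → ℂ) (hφ : ∀ n, Continuous (φ n))
    (hortho : ∀ n m, l2Inner (φ n) (φ m) = if n = m then 1 else 0) :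
    l2Inner (fun x ↦ ∑ n, c n • φ n x) (fun x ↦ ∑ n, c n • φ n x) = (∑ n, ‖c n‖ ^ 2 : ℝ) := by
  rw [l2Inner_sum_smul c hφ]
  simp [hortho, Complex.conj_mul']

lemma integral_re_sum_inner_mul_energyForm (hφ : ∀ n, Continuous (φ n))
    (hortho : ∀ n m, l2Inner (φ n) (φ m) = if n = m then 1 else 0) :
    ∫ x in 0..2 * π, (∑ n, ∑ m, ⟪φ m x, φ n x⟫_ℂ * energyForm δ (φ n) (φ m)).re =
      ∑ n, energy δ (φ n) := by
  have hcont (n m) : Continuous fun x ↦ ⟪φ m x, φ n x⟫_ℂ * energyForm δ (φ n) (φ m) :=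
    ((hφ m).inner (hφ n)).mul continuous_const
  have hcont' (n) := continuous_finsetSum Finset.univ fun m _ ↦ hcont n m
  have hint : ∫ x in 0..2 * π, ∑ n, ∑ m, ⟪φ m x, φ n x⟫_ℂ * energyForm δ (φ n) (φ m) =
      (∑ n, energy δ (φ n) : ℝ) := by
    rw [intervalIntegral.integral_finsetSum fun n _ ↦ (hcont' n).intervalIntegrable _ _]
    simp_rw [intervalIntegral.integral_finsetSum fun m _ ↦
      (hcont _ m).intervalIntegrable 0 (2 * π), intervalIntegral.integral_mul_const]
    change ∑ n, ∑ m, l2Inner (φ m) (φ n) * energyForm δ (φ n) (φ m) = _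
    simp [hortho, energyForm_self]
  have hre := Complex.reCLM.intervalIntegral_comp_comm (μ := volume)
    ((continuous_finsetSum Finset.univ fun n _ ↦ hcont' n).intervalIntegrable 0 (2 * π))
  rw [hint] at hre
  exact hre

variable [FiniteDimensional ℂ E]

-- The interpolation inequality at `x` for the test function `∑ n, ⟪φ n x, e⟫ • φ n`, whose
-- component along `e` at `x` and whose squared `L²` norm both equal `∑ n, ‖⟪e, φ n x⟫‖ ^ 2`.
lemma sum_sq_norm_inner_pow_three_le (hδ : δ < 1) (hφ : ∀ n, IsPeriodicMeanZero (φ n))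
    (hortho : ∀ n m, l2Inner (φ n) (φ m) = if n = m then 1 else 0) {e : E} (he : ‖e‖ ≤ 1)
    (x : ℝ) :
    (∑ n, ‖⟪e, φ n x⟫_ℂ‖ ^ 2) ^ 3 ≤ K2 δ ^ 2 *
      (∑ n, ∑ m, ⟪e, φ n x⟫_ℂ * ⟪φ m x, e⟫_ℂ * energyForm δ (φ n) (φ m)).re := by
  have := FiniteDimensional.complete ℂ E
  set u := ∑ n, ‖⟪e, φ n x⟫_ℂ‖ ^ 2 with hu
  let f : ℝ → E := fun y ↦ ∑ n, ⟪φ n x, e⟫_ℂ • φ n y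
  have hf : IsPeriodicMeanZero f := IsPeriodicMeanZero.sum_smul _ hφ
  have energy_f : (∑ n, ∑ m, ⟪e, φ n x⟫_ℂ * ⟪φ m x, e⟫_ℂ * energyForm δ (φ n) (φ m)).re =
      energy δ f := by
    rw [← Complex.ofReal_re (energy δ f), ← energyForm_self,
      energyForm_sum_smul δ _ fun n ↦ (hφ n).contDiff]
    simp only [inner_conj_symm]
  have norm_f : ∫ y in 0..2 * π, ‖f y‖ ^ 2 = u := by
    have h := l2Inner_sum_smul_of_orthonormal (fun n ↦ ⟪φ n x, e⟫_ℂ)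
      (fun n ↦ (hφ n).contDiff.continuous) hortho
    simp only [norm_inner_symm _ e] at h
    rw [l2Inner_self] at h
    exact_mod_cast h
  have inner_f : ⟪e, f x⟫_ℂ = u := by
    simp only [f, hu, inner_sum, inner_smul_right, Complex.ofReal_sum, Complex.ofReal_pow,
      ← Complex.conj_mul', inner_conj_symm]
  have hu0 : 0 ≤ u := Finset.sum_nonneg fun n _ ↦ sq_nonneg _
  have u_le : u ≤ ‖f x‖ := by
    calc u = ‖⟪e, f x⟫_ℂ‖ := by rw [inner_f, Complex.norm_of_nonneg hu0]
      _ ≤ ‖e‖ * ‖f x‖ := norm_inner_le_norm _ _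
      _ ≤ ‖f x‖ := mul_le_of_le_one_left (norm_nonneg _) he
  have agmon := (pow_le_pow_left₀ hu0 u_le 4).trans (hf.norm_pow_four_le hδ x)
  rw [norm_f] at agmon
  rw [energy_f]
  rcases hu0.eq_or_lt with hu0 | hu0
  · rw [← hu0, zero_pow three_ne_zero]
    exact mul_nonneg (sq_nonneg _) (hf.energy_nonneg hδ)
  · refine le_of_mul_le_mul_left ?_ hu0
    linarith

-- Rescaled to `v = 3 t²`, `u = K w`, this is `3 t² w ≤ 2 t³ + w³`.
lemma mul_le_mul_rpow_add_pow_three_div {K u v : ℝ} (hK : 0 < K) (hu : 0 ≤ u) (hv : 0 ≤ v) :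
    v * u ≤ 2 / (3 * √3) * K * v ^ (3 / 2 : ℝ) + u ^ 3 / K ^ 2 := by
  obtain ⟨t, ht, rfl⟩ : ∃ t : ℝ, 0 ≤ t ∧ v = 3 * t ^ 2 :=
    ⟨√(v / 3), by positivity, by rw [sq_sqrt (by positivity)]; ring⟩
  obtain ⟨w, hw, rfl⟩ : ∃ w : ℝ, 0 ≤ w ∧ u = K * w := ⟨u / K, by positivity, by field_simp⟩
  have rpow_eq : (3 * t ^ 2) ^ (3 / 2 : ℝ) = 3 * √3 * t ^ 3 := by
    rw [show (3 / 2 : ℝ) = 1 / 2 * (3 : ℕ) by norm_num, rpow_mul (by positivity), rpow_natCast,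
      ← sqrt_eq_rpow, sqrt_mul (by norm_num), sqrt_sq ht, mul_pow, pow_succ √3,
      sq_sqrt (by norm_num)]
  have amgm : 0 ≤ (t - w) ^ 2 * (2 * t + w) := by positivity
  calc 3 * t ^ 2 * (K * w) = K * (3 * t ^ 2 * w) := by ring
    _ ≤ K * (2 * t ^ 3 + w ^ 3) := by gcongr; linarith
    _ = 2 / (3 * √3) * K * (3 * t ^ 2) ^ (3 / 2 : ℝ) + (K * w) ^ 3 / K ^ 2 := by
        rw [rpow_eq]
        field_simp

lemma sum_mul_sum_sq_norm_inner_le {κ : Type*} [Fintype κ] (b : OrthonormalBasis κ ℂ E)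
    {v : κ → ℝ} (hv : ∀ i, 0 ≤ v i) (hδ : δ < 1) (hφ : ∀ n, IsPeriodicMeanZero (φ n))
    (hortho : ∀ n m, l2Inner (φ n) (φ m) = if n = m then 1 else 0) (x : ℝ) :
    ∑ i, v i * ∑ n, ‖⟪b i, φ n x⟫_ℂ‖ ^ 2 ≤
      2 / (3 * √3) * K2 δ * ∑ i, v i ^ (3 / 2 : ℝ) +
        (∑ n, ∑ m, ⟪φ m x, φ n x⟫_ℂ * energyForm δ (φ n) (φ m)).re := by
  have hK := K2_pos hδ
  have young (i : κ) : v i * ∑ n, ‖⟪b i, φ n x⟫_ℂ‖ ^ 2 ≤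
      2 / (3 * √3) * K2 δ * v i ^ (3 / 2 : ℝ) +
        (∑ n, ∑ m, ⟪b i, φ n x⟫_ℂ * ⟪φ m x, b i⟫_ℂ * energyForm δ (φ n) (φ m)).re := by
    refine (mul_le_mul_rpow_add_pow_three_div hK (Finset.sum_nonneg fun n _ ↦ sq_nonneg _)
      (hv i)).trans ?_
    gcongr
    rw [div_le_iff₀' (by positivity)]
    exact sum_sq_norm_inner_pow_three_le hδ hφ hortho (b.norm_eq_one i).le x
  have resolution_of_identity :
      ∑ i, ∑ n, ∑ m, ⟪b i, φ n x⟫_ℂ * ⟪φ m x, b i⟫_ℂ * energyForm δ (φ n) (φ m) =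
        ∑ n, ∑ m, ⟪φ m x, φ n x⟫_ℂ * energyForm δ (φ n) (φ m) := by
    rw [Finset.sum_comm]
    refine Finset.sum_congr rfl fun n _ ↦ ?_
    rw [Finset.sum_comm]
    refine Finset.sum_congr rfl fun m _ ↦ ?_
    simp only [← Finset.sum_mul, mul_comm ⟪b _, φ n x⟫_ℂ, b.sum_inner_mul_inner]
  refine (Finset.sum_le_sum fun i _ ↦ young i).trans_eq ?_
  rw [Finset.sum_add_distrib, ← Finset.mul_sum, ← Complex.re_sum, resolution_of_identity]

end OrthonormalFamily

section Matrices

open scoped InnerProductSpace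

variable {d : Type*} [Fintype d] [DecidableEq d]

lemma inner_toEuclideanLin_self_eq_sum {𝕜 : Type*} [RCLike 𝕜] {A : Matrix d d 𝕜}
    (hA : A.IsHermitian) (v : EuclideanSpace 𝕜 d) :
    ⟪v, A.toEuclideanLin v⟫_𝕜 =
      (∑ i, hA.eigenvalues i * ‖⟪hA.eigenvectorBasis i, v⟫_𝕜‖ ^ 2 : ℝ) := by
  have hsymm := Matrix.isSymmetric_toEuclideanLin_iff.2 hA
  have inner_basis (i : d) : ⟪hA.eigenvectorBasis i, A.toEuclideanLin v⟫_𝕜 =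
      hA.eigenvalues i * ⟪hA.eigenvectorBasis i, v⟫_𝕜 := by
    rw [← hsymm, Matrix.toLpLin_apply, hA.mulVec_eigenvectorBasis, WithLp.toLp_smul,
      RCLike.real_smul_eq_coe_smul (K := 𝕜), inner_smul_left, RCLike.conj_ofReal]
  rw [← hA.eigenvectorBasis.sum_inner_mul_inner]
  push_cast
  refine Finset.sum_congr rfl fun i _ ↦ ?_
  rw [inner_basis, ← RCLike.conj_mul, inner_conj_symm]
  ring

open scoped Matrix.Norms.L2Operator in
lemma continuous_sum_eigenvalues {X : Type*} [TopologicalSpace X]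
    {A : X → Matrix d d ℂ} (hA : Continuous A) (hAh : ∀ x, (A x).IsHermitian)
    {f : ℝ → ℝ} (hf : Continuous f) :
    Continuous fun x ↦ ∑ i, f ((hAh x).eigenvalues i) := by
  have hcfc : Continuous fun x ↦ cfc f (A x) :=
    Continuous.cfc_of_mem_nhdsSet f Filter.univ_mem hA (fun x ↦ (hAh x).isSelfAdjoint)
      hf.continuousOn
  have trace_cfc (x : X) : ∑ i, f ((hAh x).eigenvalues i) = (cfc f (A x)).trace.re := by
    rw [(hAh x).cfc_eq, Matrix.IsHermitian.cfc, Unitary.conjStarAlgAut_apply,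
      Matrix.trace_mul_cycle]
    simp [Matrix.trace]
  simp only [trace_cfc]
  exact Complex.continuous_re.comp hcfc.matrix_trace

lemma continuous_inner_toEuclideanLin {X : Type*} [TopologicalSpace X] {A : X → Matrix d d ℂ}
    (hA : Continuous A) {f : X → EuclideanSpace ℂ d} (hf : Continuous f) :
    Continuous fun x ↦ ⟪f x, (A x).toEuclideanLin (f x)⟫_ℂ :=
  hf.inner ((PiLp.continuous_toLp 2 _).comp
    (hA.matrix_mulVec ((PiLp.continuous_ofLp 2 _).comp hf)))

end Matrices

section LiebThirring

open scoped InnerProductSpace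

variable {d ι : Type*} [Fintype d] [DecidableEq d] [Fintype ι] [DecidableEq ι] {δ : ℝ}
  {V : ℝ → Matrix d d ℂ} {φ : ι → ℝ → EuclideanSpace ℂ d}

lemma sum_re_inner_toEuclideanLin_le (hδ : δ < 1) {A : Matrix d d ℂ} (hA : A.PosSemidef)
    (hφ : ∀ n, IsPeriodicMeanZero (φ n))
    (hortho : ∀ n m, l2Inner (φ n) (φ m) = if n = m then 1 else 0) (x : ℝ) :
    ∑ n, (⟪φ n x, A.toEuclideanLin (φ n x)⟫_ℂ).re ≤
      2 / (3 * √3) * K2 δ * ∑ i, hA.1.eigenvalues i ^ (3 / 2 : ℝ) +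
        (∑ n, ∑ m, ⟪φ m x, φ n x⟫_ℂ * energyForm δ (φ n) (φ m)).re := by
  refine le_trans (le_of_eq ?_) (sum_mul_sum_sq_norm_inner_le hA.1.eigenvectorBasis
    hA.eigenvalues_nonneg hδ hφ hortho x)
  simp only [inner_toEuclideanLin_self_eq_sum hA.1, Finset.mul_sum]
  exact Finset.sum_comm

theorem sum_re_l2Inner_sub_energy_le (hδ : δ < 1) (hVc : Continuous V)
    (hV : ∀ x, (V x).PosSemidef) (hφ : ∀ n, IsPeriodicMeanZero (φ n))
    (hortho : ∀ n m, l2Inner (φ n) (φ m) = if n = m then 1 else 0) :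
    ∑ n, ((l2Inner (φ n) fun x ↦ (V x).toEuclideanLin (φ n x)).re - energy δ (φ n)) ≤
      2 / (3 * √3) * K2 δ *
        ∫ x in 0..2 * π, ∑ i, (hV x).1.eigenvalues i ^ (3 / 2 : ℝ) := by
  have hcont (n : ι) : Continuous (φ n) := (hφ n).contDiff.continuous
  have hcont_re (n : ι) :
      Continuous fun x ↦ (⟪φ n x, (V x).toEuclideanLin (φ n x)⟫_ℂ).re :=
    Complex.continuous_re.comp (continuous_inner_toEuclideanLin hVc (hcont n))
  have hcont_trace : Continuous fun x ↦ 2 / (3 * √3) * K2 δ *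
      ∑ i, (hV x).1.eigenvalues i ^ (3 / 2 : ℝ) :=
    continuous_const.mul (continuous_sum_eigenvalues hVc (fun x ↦ (hV x).1)
      (continuous_rpow_const (by norm_num)))
  have hcont_energy : Continuous fun x ↦
      (∑ n, ∑ m, ⟪φ m x, φ n x⟫_ℂ * energyForm δ (φ n) (φ m)).re := by
    fun_prop
  have hint := intervalIntegral.integral_mono (μ := volume) two_pi_pos.le
    ((continuous_finsetSum Finset.univ fun n _ ↦ hcont_re n).intervalIntegrable _ _)
    ((hcont_trace.fun_add hcont_energy).intervalIntegrable _ _)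
    fun x ↦ sum_re_inner_toEuclideanLin_le hδ (hV x) hφ hortho x
  rw [intervalIntegral.integral_add (hcont_trace.intervalIntegrable _ _)
      (hcont_energy.intervalIntegrable _ _), intervalIntegral.integral_const_mul,
    integral_re_sum_inner_mul_energyForm hcont hortho,
    intervalIntegral.integral_finsetSum fun n _ ↦ (hcont_re n).intervalIntegrable _ _] at hint
  have re_l2Inner (n : ι) : (l2Inner (φ n) fun x ↦ (V x).toEuclideanLin (φ n x)).re =
      ∫ x in 0..2 * π, (⟪φ n x, (V x).toEuclideanLin (φ n x)⟫_ℂ).re :=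
    (intervalIntegral.intervalIntegral_re
      ((continuous_inner_toEuclideanLin hVc (hcont n)).intervalIntegrable _ _)).symm
  simp only [Finset.sum_sub_distrib, re_l2Inner]
  exact sub_le_iff_le_add.2 hint

end LiebThirring

section Eigenfunctions

open scoped InnerProductSpace

variable {E : Type*} [NormedAddCommGroup E] [InnerProductSpace ℂ E] {f g W : ℝ → E}

lemma l2Inner_deriv_right (hf : ContDiff ℝ 1 f) (hg : ContDiff ℝ 1 g)
    (hf_per : Function.Periodic f (2 * π)) (hg_per : Function.Periodic g (2 * π)) :
    l2Inner f (deriv g) = -l2Inner (deriv f) g := by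
  have hint : IntervalIntegrable (fun x ↦ ⟪f x, deriv g x⟫_ℂ) volume 0 (2 * π) :=
    (hf.continuous.inner hg.continuous_deriv_one).intervalIntegrable _ _
  have hint' : IntervalIntegrable (fun x ↦ ⟪deriv f x, g x⟫_ℂ) volume 0 (2 * π) :=
    (hf.continuous_deriv_one.inner hg.continuous).intervalIntegrable _ _
  have ftc := intervalIntegral.integral_eq_sub_of_hasDerivAt
    (fun x _ ↦ (hf.differentiable one_ne_zero x).hasDerivAt.inner ℂ
      (hg.differentiable one_ne_zero x).hasDerivAt) (hint.add hint')
  rw [hf_per.eq, hg_per.eq, sub_self, intervalIntegral.integral_add hint hint'] at ftc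
  exact eq_neg_of_add_eq_zero_left ftc

lemma IsPeriodicMeanZero.l2Inner_const [CompleteSpace E] (hf : IsPeriodicMeanZero f)
    (w : E) : l2Inner f (fun _ ↦ w) = 0 := by
  have h := congrArg (starRingEnd ℂ) (hf.inner_left w).integral_eq_zero
  rw [← intervalIntegral.intervalIntegral_conj, map_zero] at h
  simpa only [l2Inner, inner_conj_symm] using h

-- Pairing the eigenvalue equation with `f` removes the constant `w`, since `f` has mean zero.
lemma IsPeriodicMeanZero.l2Inner_eq_energy_add [CompleteSpace E]
    (hf : IsPeriodicMeanZero f) (hf2 : ContDiff ℝ 2 f) {δ μ : ℝ} {w : E}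
    (heq : ∀ x, -(deriv (deriv f) x) - δ • f x - (W x - w) = (-μ) • f x) :
    l2Inner f W = energy δ f + μ * l2Inner f f := by
  have hf' : ContDiff ℝ 1 (deriv f) := hf2.deriv'
  have hf'_per : Function.Periodic (deriv f) (2 * π) := fun x ↦ by
    rw [← deriv_comp_add_const, hf.periodic.funext]
  have hfc : Continuous f := hf.contDiff.continuous
  have hW (x : ℝ) : W x = (μ - δ) • f x + w - deriv (deriv f) x := by
    linear_combination (norm := module) (-1 : ℝ) • heq x
  have expand : l2Inner f W =
      (μ - δ) * l2Inner f f + l2Inner f (fun _ ↦ w) - l2Inner f (deriv (deriv f)) := by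
    simp only [l2Inner, hW, inner_sub_right, inner_add_right, RCLike.real_smul_eq_coe_smul (K := ℂ),
      inner_smul_right]
    rw [intervalIntegral.integral_sub
        (Continuous.intervalIntegrable (by fun_prop) _ _)
        ((hfc.inner hf'.continuous_deriv_one).intervalIntegrable _ _),
      intervalIntegral.integral_add (Continuous.intervalIntegrable (by fun_prop) _ _)
        (Continuous.intervalIntegrable (by fun_prop) _ _), intervalIntegral.integral_const_mul]
    simp
  rw [expand, hf.l2Inner_const, l2Inner_deriv_right hf.contDiff hf' hf.periodic hf'_per,
    ← energyForm_self, energyForm]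
  ring

end Eigenfunctions

section EuclideanSpace

variable {d : Type*} {f : ℝ → d → ℂ}

lemma deriv_toLp [Finite d] (hf : Differentiable ℝ f) :
    deriv (fun x ↦ WithLp.toLp 2 (f x)) = fun x ↦ WithLp.toLp 2 (deriv f x) :=
  have := Fintype.ofFinite d
  funext fun x ↦ ((PiLp.continuousLinearEquiv 2 ℝ fun _ : d ↦ ℂ).symm.hasFDerivAt.comp_hasDerivAt
    x (hf x).hasDerivAt).deriv

variable [Fintype d]

lemma IsPeriodicMeanZero.toLp (hf : IsPeriodicMeanZero f) :
    IsPeriodicMeanZero fun x ↦ WithLp.toLp 2 (f x) :=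
  hf.clm_comp (PiLp.continuousLinearEquiv 2 ℝ fun _ : d ↦ ℂ).symm.toContinuousLinearMap

lemma l2Inner_toLp (f g : ℝ → d → ℂ) :
    l2Inner (fun x ↦ WithLp.toLp 2 (f x)) (fun x ↦ WithLp.toLp 2 (g x)) =
      ∫ x in 0..2 * π, ∑ j, g x j * (starRingEnd ℂ) (f x j) := by
  simp only [l2Inner, EuclideanSpace.inner_toLp_toLp, dotProduct, Pi.star_apply, starRingEnd_apply]

lemma projP_eq_self {M : ℕ} {ψ : ℝ → Fin M → ℂ} (hψ : ∫ t in 0..2 * π, ψ t = 0) :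
    projP ψ = ψ := by
  ext1 x
  rw [projP, hψ, smul_zero, sub_zero]

lemma l2Inner_toEuclideanLin_eq_energy_add {M : ℕ} {V : ℝ → Matrix (Fin M) (Fin M) ℂ}
    {ψ : ℝ → Fin M → ℂ} (hψ : IsPeriodicMeanZero ψ) (hψ2 : ContDiff ℝ 2 ψ) {δ μ : ℝ}
    (heig : ∀ x, -(deriv (deriv ψ) x) - δ • ψ x -
      projP (fun t ↦ (V t).mulVec (projP ψ t)) x = (-μ) • ψ x) :
    l2Inner (fun x ↦ WithLp.toLp 2 (ψ x))
        (fun x ↦ (V x).toEuclideanLin (WithLp.toLp 2 (ψ x))) =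
      energy δ (fun x ↦ WithLp.toLp 2 (ψ x)) +
        μ * l2Inner (fun x ↦ WithLp.toLp 2 (ψ x)) fun x ↦ WithLp.toLp 2 (ψ x) := by
  refine hψ.toLp.l2Inner_eq_energy_add ((PiLp.contDiff_toLp).comp hψ2)
    (w := WithLp.toLp 2 ((1 / (2 * π)) • ∫ t in 0..2 * π, (V t).mulVec (ψ t))) fun x ↦ ?_
  rw [deriv_toLp (hψ2.differentiable two_ne_zero), deriv_toLp hψ2.differentiable_deriv_two]
  have h := heig x
  rw [projP_eq_self hψ.integral_eq_zero, projP] at h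
  exact congrArg (WithLp.toLp 2) h

end EuclideanSpace

theorem stmt_14_general {ι : Type*} [Fintype ι] [DecidableEq ι] {δ : ℝ} (hδ : δ < 1) {M : ℕ}
    {V : ℝ → Matrix (Fin M) (Fin M) ℂ} (hVc : Continuous V) (hV : ∀ x, (V x).PosSemidef)
    {φ : ι → ℝ → Fin M → ℂ} (hφ : ∀ n, ContDiff ℝ 2 (φ n))
    (hper : ∀ n, Function.Periodic (φ n) (2 * π)) (hmean : ∀ n, ∫ t in 0..2 * π, φ n t = 0)
    (hortho : ∀ n m, ∫ x in 0..2 * π, ∑ j, φ n x j * (starRingEnd ℂ) (φ m x j) =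
      if n = m then 1 else 0)
    {μ : ι → ℝ}
    (heig : ∀ n x, -(deriv (deriv (φ n)) x) - δ • φ n x -
      projP (fun t ↦ (V t).mulVec (projP (φ n) t)) x = (-(μ n)) • φ n x) :
    ∑ n, μ n ≤ 2 / (3 * √3) * K2 δ *
      ∫ x in 0..2 * π, ∑ i, (hV x).1.eigenvalues i ^ (3 / 2 : ℝ) := by
  have hmz (n : ι) : IsPeriodicMeanZero (φ n) :=
    ⟨(hφ n).of_le one_le_two, hper n, hmean n⟩
  let Φ (n : ι) (x : ℝ) : EuclideanSpace ℂ (Fin M) := WithLp.toLp 2 (φ n x)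
  have hΦ_ortho (n m : ι) : l2Inner (Φ n) (Φ m) = if n = m then 1 else 0 := by
    rw [l2Inner_toLp, hortho]
    simp only [eq_comm]
  have hΦ_eig (n : ι) :
      μ n = (l2Inner (Φ n) fun x ↦ (V x).toEuclideanLin (Φ n x)).re - energy δ (Φ n) := by
    rw [l2Inner_toEuclideanLin_eq_energy_add (hmz n) (hφ n) (heig n), hΦ_ortho]
    simp [Φ]
  rw [Finset.sum_congr rfl fun n _ ↦ hΦ_eig n]
  exact sum_re_l2Inner_sub_energy_le hδ hVc hV (fun n ↦ (hmz n).toLp) hΦ_ortho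

theorem stmt_14 (δ : ℝ) (hδ0 : 0 ≤ δ) (hδ1 : δ < 1)
    (M N : ℕ) (hM : 1 ≤ M)
    (V : ℝ → Matrix (Fin M) (Fin M) ℂ) (hVc : Continuous V)
    (hVper : Function.Periodic V (2 * π)) (hV : ∀ x, (V x).PosSemidef)
    (φ : Fin N → ℝ → Fin M → ℂ) (hφ : ∀ n, ContDiff ℝ 2 (φ n))
    (hper : ∀ n, Function.Periodic (φ n) (2 * π))
    (hmean : ∀ n, (∫ t in (0:ℝ)..(2 * π), φ n t) = 0)
    (hortho : ∀ n m, (∫ x in (0:ℝ)..(2 * π), ∑ j, φ n x j * (starRingEnd ℂ) (φ m x j)) =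
      if n = m then 1 else 0)
    (μ : Fin N → ℝ) (hμ : ∀ n, 0 < μ n)
    (heig : ∀ n x, -(deriv (deriv (φ n)) x) - δ • φ n x -
        projP (fun t => (V t).mulVec (projP (φ n) t)) x = (-(μ n)) • φ n x) :
    ∑ n, μ n ≤ (2 / (3 * Real.sqrt 3)) * K2 δ *
      ∫ x in (0:ℝ)..(2 * π), ∑ i, (hV x).1.eigenvalues i ^ (3 / 2 : ℝ) :=
  stmt_14_general hδ1 hVc hV hφ hper hmean hortho heig
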